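/- Two-body kick-error term (paper eq. 19a): for i ≠ j and any phase-space point (x,p) with r_ij ≠ 0, the nested canonical Poisson bracket satisfies {{T, V_ij}, V_ij}(x,p) = G² (m i)(m j)((m i)+(m j)) / r_ij⁴. -/

import Mathlib

open scoped RealInnerProductSpace BigOperators

noncomputable section

/-- Three-dimensional Euclidean space. -/
abbrev E3 : Type := EuclideanSpace ℝ (Fin 3)

/-- Phase space for `N` particles: positions and momenta. -/
abbrev Phase (N : ℕ) : Type := (Fin N → E3) × (Fin N → E3)

/-- Gradient of a phase-space function with respect to the `k`-th position. -/
def gradPos {N : ℕ} (A : Phase N → ℝ) (k : Fin N) (w : Phase N) : E3 :=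
  gradient (fun y => A (Function.update w.1 k y, w.2)) (w.1 k)

/-- Gradient of a phase-space function with respect to the `k`-th momentum. -/
def gradMom {N : ℕ} (A : Phase N → ℝ) (k : Fin N) (w : Phase N) : E3 :=
  gradient (fun y => A (w.1, Function.update w.2 k y)) (w.2 k)

/-- Canonical Poisson bracket of two phase-space functions. -/
def poisson {N : ℕ} (A B : Phase N → ℝ) (w : Phase N) : ℝ :=
  ∑ k, (⟪gradPos A k w, gradMom B k w⟫ - ⟪gradMom A k w, gradPos B k w⟫)

/-- Kinetic energy `T = Σ_i ‖p_i‖²/(2 m_i)`. -/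
def kinetic {N : ℕ} (m : Fin N → ℝ) (w : Phase N) : ℝ :=
  ∑ i, ‖w.2 i‖ ^ 2 / (2 * m i)

/-- Pair potential `V_ij = −G m_i m_j / ‖x_i − x_j‖`. -/
def pairPot {N : ℕ} (G : ℝ) (m : Fin N → ℝ) (i j : Fin N) (w : Phase N) : ℝ :=
  -(G * m i * m j) / ‖w.1 i - w.1 j‖

lemma hasGradientAt_mk {f g : E3 → ℝ} {f' : E3 →L[ℝ] ℝ} {v a : E3} (h : HasFDerivAt f f' a)
    (hfg : ∀ y, g y = f y) (hv : ∀ y, ⟪v, y⟫ = f' y) : HasGradientAt g v a := by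
  obtain rfl : g = f := funext hfg
  have e : (InnerProductSpace.toDual ℝ E3) v = f' := by
    apply ContinuousLinearMap.ext
    intro y
    rw [← hv y]
    simp
  rw [hasGradientAt_iff_hasFDerivAt, e]
  exact h

lemma hasGradientAt_sum_update {N : ℕ} (g : Fin N → E3 → ℝ) (p : Fin N → E3) (k : Fin N) (v : E3)
    (h : HasGradientAt (g k) v (p k)) :
    HasGradientAt (fun y => ∑ l, g l (Function.update p k y l)) v (p k) := by
  have e : (fun y => ∑ l, g l (Function.update p k y l))
      = fun y => g k y + ∑ l ∈ Finset.univ.erase k, g l (p l) := by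
    funext y
    rw [← Finset.add_sum_erase _ _ (Finset.mem_univ k)]
    congr 1
    · simp
    · apply Finset.sum_congr rfl
      intro l hl
      rw [Function.update_of_ne (Finset.ne_of_mem_erase hl)]
  rw [e, hasGradientAt_iff_hasFDerivAt] at *
  exact h.add_const _

lemma gradMom_kinetic {N : ℕ} (m : Fin N → ℝ) (k : Fin N) (w : Phase N) :
    gradMom (kinetic m) k w = (1 / m k) • w.2 k := by
  unfold gradMom kinetic
  apply HasGradientAt.gradient
  apply hasGradientAt_sum_update (fun l y => ‖y‖ ^ 2 / (2 * m l))
  have h := ((hasStrictFDerivAt_norm_sq (w.2 k)).hasFDerivAt).mul_const (1 / (2 * m k))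
  refine hasGradientAt_mk h ?_ ?_
  · intro y; ring
  · intro y
    simp [inner_smul_left]
    ring

lemma gradMom_pairPot {N : ℕ} (G : ℝ) (m : Fin N → ℝ) (i j k : Fin N) (w : Phase N) :
    gradMom (pairPot G m i j) k w = 0 := by
  unfold gradMom pairPot
  exact HasGradientAt.gradient (hasGradientAt_const _ (-(G * m i * m j) / ‖w.1 i - w.1 j‖))

lemma poisson_kinetic_pairPot {N : ℕ} (G : ℝ) (m : Fin N → ℝ) (i j : Fin N) (w : Phase N) :
    poisson (kinetic m) (pairPot G m i j) w =
      ∑ k, -((1 / m k) * ⟪gradPos (pairPot G m i j) k w, w.2 k⟫) := by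
  unfold poisson
  apply Finset.sum_congr rfl
  intro k _
  rw [gradMom_pairPot, gradMom_kinetic, inner_zero_right, inner_smul_left, real_inner_comm]
  simp

lemma gradMom_poisson {N : ℕ} (G : ℝ) (m : Fin N → ℝ) (i j k : Fin N) (w : Phase N) :
    gradMom (poisson (kinetic m) (pairPot G m i j)) k w =
      (-(1 / m k)) • gradPos (pairPot G m i j) k w := by
  unfold gradMom
  simp only [poisson_kinetic_pairPot]
  apply HasGradientAt.gradient
  apply hasGradientAt_sum_update
    (fun l y => -((1 / m l) * ⟪gradPos (pairPot G m i j) l w, y⟫))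
  refine hasGradientAt_mk ((InnerProductSpace.toDual ℝ E3)
    ((-(1 / m k)) • gradPos (pairPot G m i j) k w)).hasFDerivAt ?_ ?_
  · intro y
    simp
  · intro y
    simp [inner_smul_left]

lemma hasGradientAt_inv_norm (c : ℝ) (a b : E3) (hr : ‖a - b‖ ≠ 0) :
    HasGradientAt (fun y => c / ‖y - b‖) ((-c / ‖a - b‖ ^ 3) • (a - b)) a := by
  have h1 : HasFDerivAt (fun y : E3 => ‖y - b‖ ^ 2) (2 • innerSL ℝ (a - b)) a := by
    simpa using ((hasFDerivAt_id a).sub_const b).norm_sq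
  have hs : ‖a - b‖ ^ 2 ≠ 0 := pow_ne_zero _ hr
  have h2 := h1.sqrt hs
  have hq : √(‖a - b‖ ^ 2) ≠ 0 := by rwa [Real.sqrt_sq (norm_nonneg _)]
  have h3 := ((hasDerivAt_inv hq).comp_hasFDerivAt a h2).const_mul c
  refine hasGradientAt_mk h3 ?_ ?_
  · intro y
    simp [Real.sqrt_sq (norm_nonneg _), div_eq_mul_inv]
  · intro y
    simp [Real.sqrt_sq (norm_nonneg _), inner_smul_left, inner_sub_left]
    field_simp

lemma gradPos_left {N : ℕ} (G : ℝ) (m : Fin N → ℝ) (i j : Fin N) (hij : i ≠ j) (w : Phase N)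
    (hr : ‖w.1 i - w.1 j‖ ≠ 0) :
    gradPos (pairPot G m i j) i w
      = ((G * m i * m j) / ‖w.1 i - w.1 j‖ ^ 3) • (w.1 i - w.1 j) := by
  unfold gradPos pairPot
  apply HasGradientAt.gradient
  have := hasGradientAt_inv_norm (-(G * m i * m j)) (w.1 i) (w.1 j) hr
  simpa [Function.update_of_ne hij.symm] using this

lemma pairPot_comm {N : ℕ} (G : ℝ) (m : Fin N → ℝ) (i j : Fin N) :
    pairPot G m i j = pairPot G m j i := by
  funext w
  unfold pairPot
  rw [norm_sub_rev]
  ring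

lemma gradPos_other {N : ℕ} (G : ℝ) (m : Fin N → ℝ) (i j k : Fin N) (hi : i ≠ k) (hj : j ≠ k)
    (w : Phase N) : gradPos (pairPot G m i j) k w = 0 := by
  unfold gradPos pairPot
  simp only [Function.update_of_ne hi, Function.update_of_ne hj]
  exact HasGradientAt.gradient (hasGradientAt_const _ (-(G * m i * m j) / ‖w.1 i - w.1 j‖))

lemma norm_aux (c : ℝ) (v : E3) (hr : ‖v‖ ≠ 0) :
    ⟪(c / ‖v‖ ^ 3) • v, (c / ‖v‖ ^ 3) • v⟫ = c ^ 2 / ‖v‖ ^ 4 := by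
  rw [inner_smul_left, inner_smul_right, real_inner_self_eq_norm_sq]
  simp
  field_simp

/-- Two-body kick-error term (paper eq. 19a):
`{{T, V_ij}, V_ij} = G² m_i m_j (m_i + m_j) / r_ij⁴`. -/
theorem kick_error_two_body {N : ℕ} (G : ℝ) (hG : 0 < G) (m : Fin N → ℝ)
    (hm : ∀ i, 0 < m i) (i j : Fin N) (hij : i ≠ j) (w : Phase N)
    (hr : ‖w.1 i - w.1 j‖ ≠ 0) :
    poisson (poisson (kinetic m) (pairPot G m i j)) (pairPot G m i j) w =
      G ^ 2 * m i * m j * (m i + m j) / ‖w.1 i - w.1 j‖ ^ 4 := by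
  have hr' : ‖w.1 j - w.1 i‖ ≠ 0 := by rwa [norm_sub_rev]
  have hi := (hm i).ne'
  have hj := (hm j).ne'
  have e : poisson (poisson (kinetic m) (pairPot G m i j)) (pairPot G m i j) w
      = ∑ k, (1 / m k) *
        ⟪gradPos (pairPot G m i j) k w, gradPos (pairPot G m i j) k w⟫ := by
    rw [poisson]
    apply Finset.sum_congr rfl
    intro k _
    rw [gradMom_pairPot, gradMom_poisson, inner_zero_right, inner_smul_left]
    simp
  rw [e, Finset.sum_eq_add i j hij]
  · rw [gradPos_left G m i j hij w hr, norm_aux _ _ hr, pairPot_comm,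
      gradPos_left G m j i hij.symm w hr', norm_aux _ _ hr', norm_sub_rev (w.1 j)]
    field_simp
    ring
  · intro k _ hk
    rw [gradPos_other G m i j k hk.1.symm hk.2.symm]
    simp
  · simp
  · simp
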